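/- Let R be a zero-dimensional commutative ring with unity and x ∈ R. Then the image x + Nil(R) is a zero-divisor of the quotient ring R/Nil(R) if and only if x is a zero-divisor of R. -/

import Mathlib

theorem stmt2 (R : Type*) [CommRing R]
    (hdim : ∀ p : Ideal R, p.IsPrime → p.IsMaximal) (x : R) :
    (∃ w : R ⧸ nilradical R, w ≠ 0 ∧ (Ideal.Quotient.mk (nilradical R) x) * w = 0) ↔
      (∃ y : R, y ≠ 0 ∧ x * y = 0) := by
  constructor
  · rintro ⟨w, hw, hxw⟩
    obtain ⟨a, rfl⟩ := Ideal.Quotient.mk_surjective w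
    rw [← map_mul, Ideal.Quotient.eq_zero_iff_mem, mem_nilradical] at hxw
    rw [Ne, Ideal.Quotient.eq_zero_iff_mem, mem_nilradical] at hw
    obtain ⟨n, hn⟩ := hxw
    rw [mul_pow] at hn
    by_contra! h
    have key : ∀ (k : ℕ) (b : R), x ^ k * b = 0 → b = 0 := by
      intro k
      induction k with
      | zero => intro b hb; simpa using hb
      | succ k ih =>
        intro b hb
        apply ih
        by_contra hne
        exact h _ hne (by rw [← hb]; ring)
    exact hw ⟨n, key n _ hn⟩
  · rintro ⟨y, hy, hxy⟩
    have hx : ¬ IsUnit x := fun hu => hy (by simpa using (hu.mul_right_eq_zero).1 hxy)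
    obtain ⟨p, hp, hxp⟩ := exists_max_ideal_of_mem_nonunits hx
    have hpp := hp.isPrime
    have hmin : p ∈ (nilradical R).minimalPrimes := by
      refine ⟨⟨hpp, nilradical_le_prime p⟩, ?_⟩
      rintro q ⟨hq, -⟩ hqp
      exact ((hdim q hq).eq_of_le hp.ne_top hqp).ge
    obtain ⟨s, hs, hxs⟩ := Ideal.exists_mul_mem_of_mem_minimalPrimes hmin hxp
    refine ⟨Ideal.Quotient.mk _ s, ?_, ?_⟩
    · rwa [Ne, Ideal.Quotient.eq_zero_iff_mem]
    · rwa [← map_mul, Ideal.Quotient.eq_zero_iff_mem]
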